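/- Let k be a principal ideal domain and K a simplicial complex. The reduced homology H̃_*(K; k) is generated by the classes of missing faces if and only if: (1) the abelian group C = coker(⊕_{I∈MF(K)} Z·x_I → H̃_*(K; Z)) is finite, (2) every prime p such that C has p-torsion is invertible in k, and (3) char k ≠ p for every prime p such that H̃_*(K; Z) has p-torsion. Moreover if these hold then H̃_*(K; k) ≅ H̃_*(K; Z) ⊗ k. -/

import Mathlib

/-!
STATEMENT 7: let `k` be a PID and `K` a finite simplicial complex.  The reduced homology
`H̃_*(K; k)` is generated by the classes of missing faces iff:
(1) the cokernel `C` of `⊕_{I∈MF(K)} ℤ·x_I → H̃_*(K; ℤ)` is finite,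
(2) every prime `p` such that `C` has `p`-torsion is invertible in `k`, and
(3) `char k ≠ p` for every prime `p` such that `H̃_*(K; ℤ)` has `p`-torsion.
Moreover, if these hold then `H̃_*(K; k) ≅ H̃_*(K; ℤ) ⊗ k`.
Reduced homology is realised concretely as cycles modulo boundaries of the augmented
simplicial chain complex (all degrees together), with chains given as functions on faces.
-/

/-- The boundary operator of the augmented simplicial chain complex on `Fin m`:
`d(e_J) = Σ_{j∈J} (−1)^{|J_{<j}|} e_{J∖{j}}`, extended linearly. -/
noncomputable def simplicialBoundary (R : Type*) [CommRing R] (m : ℕ) :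
    (Finset (Fin m) → R) →ₗ[R] (Finset (Fin m) → R) :=
  Matrix.mulVecLin (Matrix.of fun τ J : Finset (Fin m) =>
    ∑ j ∈ J, if J.erase j = τ then (-1 : R) ^ ((J.filter (· < j)).card) else 0)

/-- The submodule of chains supported on the faces of `K`. -/
noncomputable def chainsOn (R : Type*) [CommRing R] {m : ℕ} (K : Finset (Finset (Fin m))) :
    Submodule R (Finset (Fin m) → R) :=
  Submodule.pi Set.univ (fun σ => if σ ∈ K then (⊤ : Submodule R R) else ⊥)

/-- Cycles of the augmented simplicial chain complex of `K`. -/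
noncomputable def cyclesOn (R : Type*) [CommRing R] {m : ℕ} (K : Finset (Finset (Fin m))) :
    Submodule R (Finset (Fin m) → R) :=
  chainsOn R K ⊓ LinearMap.ker (simplicialBoundary R m)

/-- Boundaries of the augmented simplicial chain complex of `K`. -/
noncomputable def boundariesOn (R : Type*) [CommRing R] {m : ℕ} (K : Finset (Finset (Fin m))) :
    Submodule R (Finset (Fin m) → R) :=
  Submodule.map (simplicialBoundary R m) (chainsOn R K)

/-- The (total) reduced simplicial homology `H̃_*(K; R)`: cycles modulo boundaries. -/
noncomputable def redHomology (R : Type*) [CommRing R] {m : ℕ}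
    (K : Finset (Finset (Fin m))) : Type _ :=
  ↥(cyclesOn R K) ⧸ ((boundariesOn R K).comap (cyclesOn R K).subtype)

noncomputable instance (R : Type*) [CommRing R] {m : ℕ} (K : Finset (Finset (Fin m))) :
    AddCommGroup (redHomology R K) :=
  inferInstanceAs (AddCommGroup
    (↥(cyclesOn R K) ⧸ ((boundariesOn R K).comap (cyclesOn R K).subtype)))

noncomputable instance (R : Type*) [CommRing R] {m : ℕ} (K : Finset (Finset (Fin m))) :
    Module R (redHomology R K) :=
  inferInstanceAs (Module R
    (↥(cyclesOn R K) ⧸ ((boundariesOn R K).comap (cyclesOn R K).subtype)))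

/-- The chain `c_I = Σ_{i∈I} (−1)^{|I_{<i}|} e_{I∖{i}}` associated to `I ⊆ [m]`. -/
noncomputable def missingFaceChain (R : Type*) [CommRing R] {m : ℕ} (I : Finset (Fin m)) :
    Finset (Fin m) → R :=
  fun τ => ∑ i ∈ I, if I.erase i = τ then (-1 : R) ^ ((I.filter (· < i)).card) else 0

/-- The homology class `[∂Δ_I] ∈ H̃_{|I|−2}(K; R)` of a missing face `I`. -/
noncomputable def mfClass (R : Type*) [CommRing R] {m : ℕ} (K : Finset (Finset (Fin m)))
    (I : Finset (Fin m)) : redHomology R K :=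
  letI := Classical.dec (missingFaceChain R I ∈ cyclesOn R K)
  if h : missingFaceChain R I ∈ cyclesOn R K then
    (Submodule.Quotient.mk (⟨missingFaceChain R I, h⟩ : ↥(cyclesOn R K)) :
      ↥(cyclesOn R K) ⧸ ((boundariesOn R K).comap (cyclesOn R K).subtype))
  else 0

/-- `I` is a missing face of `K`: `I` is not a face but all its proper subsets are. -/
def IsMissingFace {m : ℕ} (K : Finset (Finset (Fin m))) (I : Finset (Fin m)) : Prop :=
  I ∉ K ∧ ∀ J ⊂ I, J ∈ K

open TensorProduct

namespace Stmt7Aux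

theorem bd_single (R : Type*) [CommRing R] {m : ℕ} (J : Finset (Fin m)) :
    simplicialBoundary R m (Pi.single J 1) = missingFaceChain R J := by
  ext τ
  simp [simplicialBoundary, missingFaceChain]

theorem mfc_eq (R : Type*) [CommRing R] {m : ℕ} (J : Finset (Fin m)) :
    missingFaceChain R J =
      ∑ j ∈ J, (-1 : R) ^ ((J.filter (· < j)).card) • Pi.single (J.erase j) (1 : R) := by
  ext τ
  simp only [missingFaceChain, Finset.sum_apply, Pi.smul_apply, Pi.single_apply, smul_eq_mul,
    mul_ite, mul_one, mul_zero]
  refine Finset.sum_congr rfl fun j _ => ?_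
  simp [eq_comm]

theorem sign_swap (R : Type*) [CommRing R] {m : ℕ} (J : Finset (Fin m)) (i j : Fin m)
    (hi : i ∈ J) (hij : i < j) :
    (-1 : R) ^ ((J.filter (· < j)).card) * (-1 : R) ^ (((J.erase j).filter (· < i)).card) +
    (-1 : R) ^ ((J.filter (· < i)).card) * (-1 : R) ^ (((J.erase i).filter (· < j)).card) = 0 := by
  have h1 : (J.erase j).filter (· < i) = J.filter (· < i) := by
    ext x
    simp only [Finset.mem_filter, Finset.mem_erase]
    constructor
    · rintro ⟨⟨_, h⟩, h'⟩; exact ⟨h, h'⟩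
    · rintro ⟨h, h'⟩; exact ⟨⟨(h'.trans hij).ne, h⟩, h'⟩
  have h2 : (J.erase i).filter (· < j) = (J.filter (· < j)).erase i := by
    ext x
    simp only [Finset.mem_filter, Finset.mem_erase]
    tauto
  have h3 : ((J.filter (· < j)).erase i).card + 1 = (J.filter (· < j)).card :=
    Finset.card_erase_add_one (by simp [hi, hij])
  rw [h1, h2, ← h3]
  ring

theorem bd_mfc (R : Type*) [CommRing R] {m : ℕ} (J : Finset (Fin m)) :
    simplicialBoundary R m (missingFaceChain R J) = 0 := by
  rw [mfc_eq, map_sum]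
  simp only [map_smul, bd_single, mfc_eq R (Finset.erase _ _), Finset.smul_sum, smul_smul]
  rw [Finset.sum_sigma']
  refine Finset.sum_involution (fun x _ => ⟨x.2, x.1⟩) ?_ ?_ ?_ ?_
  · rintro ⟨j, i⟩ h
    simp only [Finset.mem_sigma, Finset.mem_erase] at h
    obtain ⟨hj, hij, hi⟩ := h
    dsimp only
    rw [Finset.erase_right_comm, ← add_smul]
    rcases lt_or_gt_of_ne hij with h | h
    · rw [sign_swap R J i j hi h, zero_smul]
    · rw [add_comm, sign_swap R J j i hj h, zero_smul]
  · rintro ⟨j, i⟩ h _ e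
    simp only [Finset.mem_sigma, Finset.mem_erase] at h
    simp only [Sigma.mk.injEq] at e
    exact h.2.1 e.1
  · rintro ⟨j, i⟩ h
    simp only [Finset.mem_sigma, Finset.mem_erase] at h ⊢
    exact ⟨h.2.2, h.2.1.symm, h.1⟩
  · rintro ⟨j, i⟩ h
    rfl

theorem chain_eq (R : Type*) [CommRing R] {m : ℕ} (x : Finset (Fin m) → R) :
    x = ∑ J, x J • Pi.single J (1 : R) := by
  ext τ
  simp [Finset.sum_apply, Pi.single_apply]

theorem bd_bd (R : Type*) [CommRing R] {m : ℕ} (x : Finset (Fin m) → R) :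
    simplicialBoundary R m (simplicialBoundary R m x) = 0 := by
  conv_lhs => rw [chain_eq R x]
  simp [map_sum, map_smul, bd_single, bd_mfc]

theorem mem_chainsOn {R : Type*} [CommRing R] {m : ℕ} {K : Finset (Finset (Fin m))}
    {x : Finset (Fin m) → R} : x ∈ chainsOn R K ↔ ∀ σ, σ ∉ K → x σ = 0 := by
  simp only [chainsOn, Submodule.mem_pi, Set.mem_univ, true_imp_iff]
  refine forall_congr' fun σ => ?_
  by_cases h : σ ∈ K <;> simp [h]

theorem mfc_mem {R : Type*} [CommRing R] {m : ℕ} {K : Finset (Finset (Fin m))}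
    {J : Finset (Fin m)} (h : ∀ j ∈ J, J.erase j ∈ K) : missingFaceChain R J ∈ chainsOn R K := by
  rw [mem_chainsOn]
  intro σ hσ
  refine Finset.sum_eq_zero fun j hj => if_neg ?_
  rintro rfl
  exact hσ (h j hj)

theorem mfc_cycle {R : Type*} [CommRing R] {m : ℕ} {K : Finset (Finset (Fin m))}
    {J : Finset (Fin m)} (h : ∀ j ∈ J, J.erase j ∈ K) : missingFaceChain R J ∈ cyclesOn R K :=
  ⟨mfc_mem h, bd_mfc R J⟩

theorem bd_chain {R : Type*} [CommRing R] {m : ℕ} {K : Finset (Finset (Fin m))}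
    (hdown : ∀ σ ∈ K, ∀ τ ⊆ σ, τ ∈ K) {x : Finset (Fin m) → R} (hx : x ∈ chainsOn R K) :
    simplicialBoundary R m x ∈ chainsOn R K := by
  rw [chain_eq R x, map_sum]
  refine Submodule.sum_mem _ fun J _ => ?_
  rw [map_smul, bd_single]
  by_cases hJ : J ∈ K
  · exact Submodule.smul_mem _ _ (mfc_mem fun j _ => hdown J hJ _ (Finset.erase_subset _ _))
  · rw [mem_chainsOn.1 hx J hJ, zero_smul]; exact Submodule.zero_mem _

theorem bd_map {R S : Type*} [CommRing R] [CommRing S] (f : R →+* S) {m : ℕ}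
    (x : Finset (Fin m) → R) :
    simplicialBoundary S m (fun σ => f (x σ)) = fun σ => f (simplicialBoundary R m x σ) := by
  ext τ
  simp only [simplicialBoundary, Matrix.mulVecLin_apply, Matrix.mulVec, dotProduct, Matrix.of_apply,
    map_sum, map_mul]
  refine Finset.sum_congr rfl fun J _ => ?_
  congr 1
  refine Finset.sum_congr rfl fun j _ => ?_
  split_ifs <;> simp

theorem map_chain {R S : Type*} [CommRing R] [CommRing S] (f : R →+* S) {m : ℕ}
    {K : Finset (Finset (Fin m))} {x : Finset (Fin m) → R} (hx : x ∈ chainsOn R K) :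
    (fun σ => f (x σ)) ∈ chainsOn S K := by
  rw [mem_chainsOn] at *
  intro σ h
  simp [hx σ h]

theorem map_cycle {R S : Type*} [CommRing R] [CommRing S] (f : R →+* S) {m : ℕ}
    {K : Finset (Finset (Fin m))} {x : Finset (Fin m) → R} (hx : x ∈ cyclesOn R K) :
    (fun σ => f (x σ)) ∈ cyclesOn S K := by
  refine ⟨map_chain f hx.1, ?_⟩
  have : simplicialBoundary R m x = 0 := hx.2
  change simplicialBoundary S m _ = 0
  rw [bd_map, this]
  ext; simp

theorem map_boundary {R S : Type*} [CommRing R] [CommRing S] (f : R →+* S) {m : ℕ}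
    {K : Finset (Finset (Fin m))} {x : Finset (Fin m) → R} (hx : x ∈ boundariesOn R K) :
    (fun σ => f (x σ)) ∈ boundariesOn S K := by
  obtain ⟨y, hy, rfl⟩ := hx
  exact ⟨_, map_chain f hy, bd_map f y⟩

theorem map_mfc {R S : Type*} [CommRing R] [CommRing S] (f : R →+* S) {m : ℕ}
    (I : Finset (Fin m)) :
    (fun σ => f (missingFaceChain R I σ)) = missingFaceChain S I := by
  rw [← bd_single, ← bd_single, ← bd_map]
  congr 1
  ext σ
  by_cases h : σ = I
  · subst h; simp
  · simp [h]

/-- The class map from cycles to homology. -/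
noncomputable def cls (R : Type*) [CommRing R] {m : ℕ} (K : Finset (Finset (Fin m))) :
    cyclesOn R K →ₗ[R] redHomology R K :=
  Submodule.mkQ ((boundariesOn R K).comap (cyclesOn R K).subtype)

theorem cls_surj (R : Type*) [CommRing R] {m : ℕ} (K : Finset (Finset (Fin m))) :
    Function.Surjective (cls R K) := Submodule.mkQ_surjective _

theorem cls_eq_zero {R : Type*} [CommRing R] {m : ℕ} {K : Finset (Finset (Fin m))}
    {z : cyclesOn R K} : cls R K z = 0 ↔ (z : Finset (Fin m) → R) ∈ boundariesOn R K := 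
  Submodule.Quotient.mk_eq_zero _

theorem mfClass_eq {R : Type*} [CommRing R] {m : ℕ} {K : Finset (Finset (Fin m))}
    {I : Finset (Fin m)} (h : missingFaceChain R I ∈ cyclesOn R K) :
    mfClass R K I = cls R K ⟨_, h⟩ := by
  exact dif_pos h

/-- Base change on cycles. -/
noncomputable def cyc (k : Type*) [CommRing k] {m : ℕ} (K : Finset (Finset (Fin m))) :
    cyclesOn ℤ K →+ cyclesOn k K where
  toFun z := ⟨fun σ => (Int.castRingHom k) (z.1 σ), map_cycle _ z.2⟩
  map_zero' := by ext; simp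
  map_add' x y := by ext; simp

/-- Base change on homology. -/
noncomputable def rho (k : Type*) [CommRing k] {m : ℕ} (K : Finset (Finset (Fin m))) :
    redHomology ℤ K →ₗ[ℤ] redHomology k K :=
  Submodule.liftQ ((boundariesOn ℤ K).comap (cyclesOn ℤ K).subtype)
    (((cls k K).toAddMonoidHom.comp (cyc k K)).toIntLinearMap) (by
      intro z hz
      exact cls_eq_zero.2 (map_boundary (Int.castRingHom k) hz))

theorem rho_cls (k : Type*) [CommRing k] {m : ℕ} (K : Finset (Finset (Fin m))) (z : cyclesOn ℤ K) :
    rho k K (cls ℤ K z) = cls k K (cyc k K z) := rfl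

theorem mf_cycle {R : Type*} [CommRing R] {m : ℕ} {K : Finset (Finset (Fin m))}
    {J : Finset (Fin m)} (h : IsMissingFace K J) : missingFaceChain R J ∈ cyclesOn R K :=
  mfc_cycle fun _ hj => h.2 _ (Finset.erase_ssubset hj)

theorem rho_mf (k : Type*) [CommRing k] {m : ℕ} {K : Finset (Finset (Fin m))}
    {J : Finset (Fin m)} (h : IsMissingFace K J) : rho k K (mfClass ℤ K J) = mfClass k K J := by
  rw [mfClass_eq (mf_cycle h), mfClass_eq (mf_cycle h), rho_cls]
  congr 1
  exact Subtype.ext (map_mfc (Int.castRingHom k) J)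

/-- The comparison map. -/
noncomputable def phi (k : Type*) [CommRing k] {m : ℕ} (K : Finset (Finset (Fin m))) :
    (k ⊗[ℤ] redHomology ℤ K) →ₗ[k] redHomology k K :=
  LinearMap.liftBaseChange k (rho k K)

theorem phi_tmul (k : Type*) [CommRing k] {m : ℕ} (K : Finset (Finset (Fin m))) (c : k)
    (x : redHomology ℤ K) : phi k K (c ⊗ₜ x) = c • rho k K x := by
  simp [phi]

theorem exists_retract {m : ℕ} (K : Finset (Finset (Fin m))) :
    ∃ r : (Finset (Fin m) → ℤ) →ₗ[ℤ] cyclesOn ℤ K, ∀ z : cyclesOn ℤ K, r z = z := by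
  classical
  let g : (Finset (Fin m) → ℤ) →ₗ[ℤ] (Finset (Fin m) → ℤ) × (Finset (Fin m) → ℤ) :=
    LinearMap.prod (LinearMap.pi fun σ => if σ ∈ K then 0 else LinearMap.proj σ)
      (simplicialBoundary ℤ m)
  have hg : ∀ x, x ∈ cyclesOn ℤ K ↔ g x = 0 := by
    intro x
    change (x ∈ chainsOn ℤ K ∧ simplicialBoundary ℤ m x = 0) ↔ _
    rw [mem_chainsOn, Prod.ext_iff]
    refine and_congr ?_ Iff.rfl
    rw [funext_iff]
    refine forall_congr' fun σ => ?_
    by_cases h : σ ∈ K <;> simp [g, h]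
  obtain ⟨s, hs⟩ := Module.projective_lifting_property g.rangeRestrict LinearMap.id
    g.surjective_rangeRestrict
  have hs' : ∀ y, g (s y) = y := fun y => by
    have := LinearMap.congr_fun hs y
    simpa using congrArg Subtype.val this
  refine ⟨LinearMap.codRestrict _ (LinearMap.id - s ∘ₗ g.rangeRestrict) ?_, ?_⟩
  · intro x
    rw [hg]
    simp [hs']
  · intro z
    ext1
    have : g.rangeRestrict z = 0 := Subtype.ext ((hg _).1 z.2)
    simp [this]

/-- Base change on cycles, linearised. -/
noncomputable def theta (k : Type*) [CommRing k] {m : ℕ} (K : Finset (Finset (Fin m))) :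
    (k ⊗[ℤ] cyclesOn ℤ K) →ₗ[k] cyclesOn k K :=
  LinearMap.liftBaseChange k (cyc k K).toIntLinearMap

theorem theta_tmul (k : Type*) [CommRing k] {m : ℕ} (K : Finset (Finset (Fin m))) (c : k)
    (z : cyclesOn ℤ K) : theta k K (c ⊗ₜ z) = c • cyc k K z := by
  simp [theta]

theorem theta_inj (k : Type*) [CommRing k] {m : ℕ} (K : Finset (Finset (Fin m))) :
    Function.Injective (theta k K) := by
  obtain ⟨r, hr⟩ := exists_retract K
  let ψ : (Finset (Fin m) → k) →ₗ[k] k ⊗[ℤ] cyclesOn ℤ K :=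
    ∑ σ, (LinearMap.proj σ).smulRight ((1 : k) ⊗ₜ[ℤ] r (Pi.single σ 1))
  have : ψ ∘ₗ (cyclesOn k K).subtype ∘ₗ theta k K = LinearMap.id := by
    ext z
    simp only [ψ, TensorProduct.AlgebraTensorModule.curry_apply, 
      TensorProduct.curry_apply, LinearMap.coe_restrictScalars, LinearMap.comp_apply,
      theta_tmul, one_smul, LinearMap.id_apply, LinearMap.sum_apply, LinearMap.smulRight_apply,
      LinearMap.proj_apply, Submodule.subtype_apply]
    conv_rhs => rw [← hr z, chain_eq ℤ z.1, map_sum, TensorProduct.tmul_sum]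
    refine Finset.sum_congr rfl fun σ _ => ?_
    rw [map_smul, TensorProduct.tmul_smul]
    change ((z.1 σ : ℤ) : k) • _ = _
    rw [Int.cast_smul_eq_zsmul]
  intro a b hab
  have h1 := LinearMap.congr_fun this a
  have h2 := LinearMap.congr_fun this b
  simp only [LinearMap.comp_apply, LinearMap.id_apply] at h1 h2
  rw [← h1, ← h2, hab]

/-- The class map, tensored with `k`. -/
noncomputable def qk (k : Type*) [CommRing k] {m : ℕ} (K : Finset (Finset (Fin m))) :
    (k ⊗[ℤ] cyclesOn ℤ K) →ₗ[k] (k ⊗[ℤ] redHomology ℤ K) :=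
  LinearMap.baseChange k ((cls ℤ K).toAddMonoidHom.toIntLinearMap)

theorem qk_tmul (k : Type*) [CommRing k] {m : ℕ} (K : Finset (Finset (Fin m))) (c : k)
    (z : cyclesOn ℤ K) : qk k K (c ⊗ₜ z) = c ⊗ₜ cls ℤ K z := rfl

theorem phi_theta (k : Type*) [CommRing k] {m : ℕ} (K : Finset (Finset (Fin m)))
    (u : k ⊗[ℤ] cyclesOn ℤ K) :
    phi k K (qk k K u) = cls k K (theta k K u) := by
  induction u with
  | zero => simp
  | add x y hx hy => simp [hx, hy]
  | tmul c z => rw [qk_tmul, phi_tmul, theta_tmul, map_smul, rho_cls]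

theorem qk_surj (k : Type*) [CommRing k] {m : ℕ} (K : Finset (Finset (Fin m))) :
    Function.Surjective (qk k K) :=
  LinearMap.lTensor_surjective k (g := (cls ℤ K).toAddMonoidHom.toIntLinearMap) (cls_surj ℤ K)

theorem boundary_lift (k : Type*) [CommRing k] {m : ℕ} {K : Finset (Finset (Fin m))}
    (hdown : ∀ σ ∈ K, ∀ τ ⊆ σ, τ ∈ K) (x : cyclesOn k K) (hx : x.1 ∈ boundariesOn k K) :
    ∃ u, theta k K u = x ∧ qk k K u = 0 := by
  obtain ⟨y, hy, hyx⟩ := hx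
  have hc : ∀ J ∈ K, missingFaceChain ℤ J ∈ cyclesOn ℤ K := fun J hJ =>
    mfc_cycle fun j _ => hdown J hJ _ (Finset.erase_subset _ _)
  refine ⟨∑ J : K, y J ⊗ₜ[ℤ] (⟨missingFaceChain ℤ J.1, hc _ J.2⟩ : cyclesOn ℤ K), ?_, ?_⟩
  · ext1
    rw [← hyx, chain_eq k y, map_sum, map_sum, ← Submodule.subtype_apply, map_sum]
    simp only [theta_tmul, map_smul, bd_single, Submodule.subtype_apply]
    have : ∀ J : K, ((cyc k K ⟨missingFaceChain ℤ J.1, hc _ J.2⟩ : cyclesOn k K) : Finset (Fin m) → k)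
        = missingFaceChain k J.1 := fun J => map_mfc (Int.castRingHom k) J.1
    simp only [this, ← chain_eq k y]
    rw [Finset.sum_coe_sort K (fun J => y J • missingFaceChain k J)]
    refine Finset.sum_subset (Finset.subset_univ _) fun J _ hJ => ?_
    rw [mem_chainsOn.1 hy J hJ, zero_smul]
  · rw [map_sum]
    refine Finset.sum_eq_zero fun J _ => ?_
    rw [qk_tmul, cls_eq_zero.2, TensorProduct.tmul_zero]
    refine ⟨Pi.single J.1 1, ?_, bd_single ℤ J.1⟩
    change _ ∈ chainsOn ℤ K
    rw [mem_chainsOn]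
    intro σ hσ
    rw [Pi.single_apply, if_neg]
    rintro rfl
    exact hσ J.2

theorem phi_inj (k : Type*) [CommRing k] {m : ℕ} {K : Finset (Finset (Fin m))}
    (hdown : ∀ σ ∈ K, ∀ τ ⊆ σ, τ ∈ K) : Function.Injective (phi k K) := by
  rw [injective_iff_map_eq_zero]
  intro t ht
  obtain ⟨u, rfl⟩ := qk_surj k K t
  rw [phi_theta, cls_eq_zero] at ht
  obtain ⟨u', h1, h2⟩ := boundary_lift k hdown _ ht
  rw [← theta_inj k K h1, h2]

theorem phi_surj (k : Type*) [CommRing k] {m : ℕ} {K : Finset (Finset (Fin m))}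
    (h : Function.Surjective (theta k K)) : Function.Surjective (phi k K) := by
  intro t
  obtain ⟨x, rfl⟩ := cls_surj k K t
  obtain ⟨u, rfl⟩ := h x
  exact ⟨_, phi_theta k K u⟩

theorem theta_surj (k : Type*) [CommRing k] {m : ℕ} {K : Finset (Finset (Fin m))}
    (hdown : ∀ σ ∈ K, ∀ τ ⊆ σ, τ ∈ K)
    (h : Function.Surjective (phi k K)) : Function.Surjective (theta k K) := by
  intro x
  obtain ⟨t, ht⟩ := h (cls k K x)
  obtain ⟨u, rfl⟩ := qk_surj k K t
  rw [phi_theta, eq_comm, ← sub_eq_zero, ← map_sub, cls_eq_zero] at ht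
  obtain ⟨u', h1, -⟩ := boundary_lift k hdown _ ht
  exact ⟨u' + u, by rw [map_add, h1]; simp⟩

theorem expand {R k ι : Type*} [CommRing R] [IsDomain R] [IsPrincipalIdealRing R] [CommRing k]
    [Algebra R k] [Module.IsTorsionFree R k] [Finite ι] (x : ι → k) :
    ∃ (n : ℕ) (b : Fin n → k) (X : Fin n → ι → R), LinearIndependent R b ∧
      ∀ σ, x σ = ∑ j, X j σ • b j := by
  let S := Submodule.span R (Set.range x)
  have : Module.Finite R S := Module.Finite.span_of_finite R (Set.finite_range x)
  have : Module.Free R S := inferInstance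
  let B := Module.finBasis R S
  refine ⟨_, fun j => (B j : k), fun j σ => B.repr ⟨x σ, Submodule.subset_span ⟨σ, rfl⟩⟩ j, ?_, ?_⟩
  · exact B.linearIndependent.map' S.subtype (by simp)
  · intro σ
    have := congrArg Subtype.val (B.sum_repr ⟨x σ, Submodule.subset_span ⟨σ, rfl⟩⟩)
    rw [Submodule.coe_sum] at this
    exact this.symm

theorem expand_cycle {R k : Type*} [CommRing R] [IsDomain R] [IsPrincipalIdealRing R] [CommRing k]
    [Algebra R k] [Module.IsTorsionFree R k] {m : ℕ} {K : Finset (Finset (Fin m))}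
    (x : Finset (Fin m) → k) (hx : x ∈ cyclesOn k K) :
    ∃ (n : ℕ) (b : Fin n → k) (X : Fin n → Finset (Fin m) → R), (∀ j, X j ∈ cyclesOn R K) ∧
      x = ∑ j, b j • fun σ => algebraMap R k (X j σ) := by
  obtain ⟨n, b, X, hb, hX⟩ := expand (R := R) x
  have hx' : x = ∑ j, b j • fun σ => algebraMap R k (X j σ) := by
    ext σ
    rw [hX σ]
    simp [Finset.sum_apply, Algebra.smul_def, mul_comm]
  refine ⟨n, b, X, fun j => ⟨mem_chainsOn.2 fun σ hσ => ?_, ?_⟩, hx'⟩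
  · have h0 := mem_chainsOn.1 hx.1 σ hσ
    rw [hX σ] at h0
    exact Fintype.linearIndependent_iff.1 hb _ h0 j
  · have h0 : simplicialBoundary k m x = 0 := hx.2
    change simplicialBoundary R m (X j) = 0
    ext σ
    rw [hx', map_sum] at h0
    simp only [map_smul, bd_map] at h0
    have h1 := congrFun h0 σ
    refine Fintype.linearIndependent_iff.1 hb (fun j => simplicialBoundary R m (X j) σ) ?_ j
    simpa [Finset.sum_apply, Algebra.smul_def, mul_comm] using h1

theorem theta_surj_of_expand {R k : Type*} [CommRing R] [IsDomain R] [IsPrincipalIdealRing R]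
    [CommRing k] [Algebra R k] [Module.IsTorsionFree R k] {m : ℕ} {K : Finset (Finset (Fin m))}
    (hl : ∀ z ∈ cyclesOn R K, ∃ z' : cyclesOn ℤ K, ∀ σ, ((z'.1 σ : ℤ) : R) = z σ) :
    Function.Surjective (theta k K) := by
  rintro ⟨x, hx⟩
  obtain ⟨n, b, X, hX, rfl⟩ := expand_cycle (R := R) x hx
  choose z hz using fun j => hl (X j) (hX j)
  refine ⟨∑ j, b j ⊗ₜ z j, ?_⟩
  ext1
  rw [map_sum, ← Submodule.subtype_apply, map_sum]
  refine Finset.sum_congr rfl fun j _ => ?_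
  rw [theta_tmul, map_smul]
  congr 1
  ext σ
  rw [← hz j σ, map_intCast]
  rfl

theorem theta_surj_zero {k : Type*} [CommRing k] [IsDomain k] [CharZero k] {m : ℕ}
    {K : Finset (Finset (Fin m))} : Function.Surjective (theta k K) :=
  theta_surj_of_expand (R := ℤ) fun z hz => ⟨⟨z, hz⟩, fun _ => by simp⟩

theorem theta_surj_p {k : Type*} [CommRing k] [IsDomain k] (p : ℕ) [Fact p.Prime] [CharP k p]
    {m : ℕ} {K : Finset (Finset (Fin m))} (hdown : ∀ σ ∈ K, ∀ τ ⊆ σ, τ ∈ K)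
    (h : ∀ x : redHomology ℤ K, (p : ℤ) • x = 0 → x = 0) : Function.Surjective (theta k K) := by
  let _ := ZMod.algebra k p
  refine theta_surj_of_expand (R := ZMod p) fun z hz => ?_
  choose w hw using fun σ => ZMod.intCast_surjective (z σ)
  classical
  let v : Finset (Fin m) → ℤ := fun σ => if σ ∈ K then w σ else 0
  have hv : ∀ σ, ((v σ : ℤ) : ZMod p) = z σ := by
    intro σ
    by_cases hσ : σ ∈ K
    · simp [v, hσ, hw]
    · simp [v, hσ, mem_chainsOn.1 hz.1 σ hσ]
  have hvK : v ∈ chainsOn ℤ K := mem_chainsOn.2 fun σ hσ => by simp [v, hσ]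
  have hd : ∀ σ, (p : ℤ) ∣ simplicialBoundary ℤ m v σ := by
    intro σ
    rw [← ZMod.intCast_zmod_eq_zero_iff_dvd]
    have h0 : simplicialBoundary (ZMod p) m z = 0 := hz.2
    rw [← funext hv] at h0
    exact (congrFun (bd_map (Int.castRingHom (ZMod p)) v) σ).symm.trans (congrFun h0 σ)
  choose y hy using hd
  have hy' : simplicialBoundary ℤ m v = (p : ℤ) • y := funext hy
  have hp : (p : ℤ) ≠ 0 := by exact_mod_cast (Fact.out : p.Prime).ne_zero
  have hyc : y ∈ cyclesOn ℤ K := by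
    constructor
    · refine mem_chainsOn.2 fun σ hσ => ?_
      have := mem_chainsOn.1 (bd_chain hdown hvK) σ hσ
      rw [hy σ] at this
      exact (mul_eq_zero.1 this).resolve_left hp
    · change simplicialBoundary ℤ m y = 0
      have := bd_bd ℤ v
      rw [hy', map_smul] at this
      exact (smul_eq_zero.1 this).resolve_left hp
  have hc : cls ℤ K ⟨y, hyc⟩ = 0 := by
    apply h
    rw [← map_smul, cls_eq_zero]
    exact ⟨v, hvK, hy'⟩
  obtain ⟨u, hu, huy⟩ := cls_eq_zero.1 hc
  refine ⟨⟨v - (p : ℤ) • u, Submodule.sub_mem _ hvK (Submodule.smul_mem _ _ hu), ?_⟩, ?_⟩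
  · change simplicialBoundary ℤ m _ = 0
    rw [map_sub, map_smul, huy, hy', sub_self]
  · intro σ
    simp [hv]

theorem no_torsion_p {k : Type*} [CommRing k] [IsDomain k] (p : ℕ) [Fact p.Prime] [CharP k p]
    {m : ℕ} {K : Finset (Finset (Fin m))}
    (h : Function.Surjective (theta k K)) (t : redHomology ℤ K) (ht : (p : ℤ) • t = 0) :
    t = 0 := by
  let _ := ZMod.algebra k p
  obtain ⟨y, rfl⟩ := cls_surj ℤ K t
  rw [← map_smul, cls_eq_zero] at ht
  obtain ⟨x, hx, hxy⟩ := ht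
  have hp : (p : ℤ) ≠ 0 := by exact_mod_cast (Fact.out : p.Prime).ne_zero
  -- reduction of `x` is a cycle over `k`
  have hxk : (fun σ => Int.castRingHom k (x σ)) ∈ cyclesOn k K := by
    refine ⟨map_chain _ hx, ?_⟩
    change simplicialBoundary k m _ = 0
    rw [bd_map, hxy]
    ext σ
    simp
  obtain ⟨u, hu⟩ := h ⟨_, hxk⟩
  -- a functional `k → 𝔽_p` with `1 ↦ 1`
  obtain ⟨π, hπ⟩ : ∃ π : k →ₗ[ZMod p] ZMod p, π 1 = 1 := by
    obtain ⟨π, hπ⟩ := LinearMap.exists_leftInverse_of_injective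
      (Algebra.linearMap (ZMod p) k) (LinearMap.ker_eq_bot.2 (algebraMap (ZMod p) k).injective)
    exact ⟨π, by simpa using LinearMap.congr_fun hπ 1⟩
  have hπ' : ∀ (a : ℤ), π (a : k) = (a : ZMod p) := by
    intro a
    rw [← zsmul_one a, map_zsmul, hπ, zsmul_one]
  have key : ∀ u : k ⊗[ℤ] cyclesOn ℤ K, ∃ z : cyclesOn ℤ K, ∀ σ,
      π ((theta k K u).1 σ) = ((z.1 σ : ℤ) : ZMod p) := by
    intro u
    induction u with
    | zero => exact ⟨0, fun σ => by simp⟩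
    | add a b ha hb =>
      obtain ⟨z, hz⟩ := ha
      obtain ⟨z', hz'⟩ := hb
      exact ⟨z + z', fun σ => by simp [hz, hz']⟩
    | tmul c z =>
      obtain ⟨n, hn⟩ := ZMod.intCast_surjective (π c)
      refine ⟨n • z, fun σ => ?_⟩
      rw [theta_tmul]
      change π (c * ((z.1 σ : ℤ) : k)) = ((n * z.1 σ : ℤ) : ZMod p)
      rw [mul_comm, ← zsmul_eq_mul, map_zsmul, ← hn]
      push_cast
      rw [zsmul_eq_mul, mul_comm]
  obtain ⟨z, hz⟩ := key u
  have hd : ∀ σ, (p : ℤ) ∣ x σ - z.1 σ := by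
    intro σ
    rw [← ZMod.intCast_zmod_eq_zero_iff_dvd]
    have := hz σ
    rw [hu] at this
    have h2 := hπ' (x σ)
    push_cast
    rw [← this, ← h2]
    simp
  choose w hw using hd
  have hxw : x = z.1 + (p : ℤ) • w := by
    ext σ
    have := hw σ
    simp only [Pi.add_apply, Pi.smul_apply, smul_eq_mul]
    linarith
  rw [cls_eq_zero]
  refine ⟨w, ?_, ?_⟩
  · refine mem_chainsOn.2 fun σ hσ => ?_
    have h1 := hw σ
    rw [mem_chainsOn.1 hx σ hσ, mem_chainsOn.1 z.2.1 σ hσ, sub_zero] at h1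
    exact (mul_eq_zero.1 h1.symm).resolve_left hp
  · have hz0 : simplicialBoundary ℤ m z.1 = 0 := z.2.2
    rw [hxw, map_add, hz0, zero_add, map_smul] at hxy
    exact smul_right_injective _ hp hxy

theorem hom_zero {k C N : Type*} [CommRing k] [AddCommGroup C] [Subsingleton (k ⊗[ℤ] C)]
    [AddCommGroup N] [Module k N] (f : C →ₗ[ℤ] N) (c : C) : f c = 0 := by
  have h := LinearMap.liftBaseChange_tmul k f (1 : k) c
  rw [one_smul] at h
  rw [← h, Subsingleton.elim ((1 : k) ⊗ₜ[ℤ] c) 0, map_zero]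

theorem finite_of_tensor (k C : Type*) [CommRing k] [Nontrivial k] [AddCommGroup C]
    [Module.Finite ℤ C] [Subsingleton (k ⊗[ℤ] C)] : Finite C := by
  let Q := C ⧸ Submodule.torsion ℤ C
  have : Module.Finite ℤ Q := inferInstance
  have : Module.Free ℤ Q := inferInstance
  let B := Module.Free.chooseBasis ℤ Q
  have hB : IsEmpty (Module.Free.ChooseBasisIndex ℤ Q) := by
    constructor
    intro i
    obtain ⟨c, hc⟩ := Submodule.mkQ_surjective _ (B i)
    have := hom_zero (k := k) ((Algebra.linearMap ℤ k) ∘ₗ (B.coord i) ∘ₗ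
      (Submodule.torsion ℤ C).mkQ) c
    simp only [LinearMap.comp_apply, hc] at this
    simp at this
  have hQ : Subsingleton Q := B.repr.toEquiv.subsingleton
  have ht : Module.IsTorsion ℤ C := by
    intro x
    have h0 : (Submodule.torsion ℤ C).mkQ x = 0 := Subsingleton.elim _ _
    rw [Submodule.mkQ_apply, Submodule.Quotient.mk_eq_zero] at h0
    exact h0
  exact Module.finite_of_fg_torsion C ht

theorem exists_functional_aux {F Q : Type*} [Field F] [AddCommGroup Q] [Module F Q]
    {q : Q} (hq : q ≠ 0) : ∃ f : Q →ₗ[F] F, f q ≠ 0 := by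
  by_contra! h
  exact hq ((Module.forall_dual_apply_eq_zero_iff F q).1 h)

theorem exists_functional {Q : Type*} [AddCommGroup Q] (p : ℕ) [Fact p.Prime]
    (hQ : ∀ q : Q, p • q = 0) {q : Q} (hq : q ≠ 0) : ∃ f : Q →+ ZMod p, f q ≠ 0 := by
  obtain ⟨f, hf⟩ := @exists_functional_aux (ZMod p) Q _ _ (AddCommGroup.zmodModule hQ) q hq
  exact ⟨@LinearMap.toAddMonoidHom _ _ _ _ _ _ _ _ (_) (_) _ f, hf⟩

theorem unit_of_tensor (k C : Type*) [CommRing k] [AddCommGroup C]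
    [Module.Finite ℤ C] [Subsingleton (k ⊗[ℤ] C)] (p : ℕ) (hp : p.Prime) (x : C) (hx : x ≠ 0)
    (hpx : (p : ℤ) • x = 0) : IsUnit (p : k) := by
  by_contra hu
  have : Fact p.Prime := ⟨hp⟩
  have hnt : Nontrivial (k ⧸ Ideal.span {(p : k)}) :=
    Ideal.Quotient.nontrivial_iff.2 (by rwa [Ne, Ideal.span_singleton_eq_top])
  let g : C →ₗ[ℤ] C := LinearMap.lsmul ℤ C (p : ℤ)
  have hg : ¬ Function.Surjective g := by
    intro hs
    have := OrzechProperty.injective_of_surjective_endomorphism g hs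
    exact hx (this (by simpa [g] using hpx))
  -- the quotient `C / pC` as an `𝔽_p` vector space
  let Q := C ⧸ LinearMap.range g
  have hQp : ∀ q : Q, p • q = 0 := by
    intro q
    obtain ⟨c, rfl⟩ := Submodule.mkQ_surjective _ q
    rw [← map_nsmul, Submodule.mkQ_apply, Submodule.Quotient.mk_eq_zero]
    exact ⟨c, by simp [g]⟩
  obtain ⟨c, hc⟩ : ∃ c : C, c ∉ LinearMap.range g := by
    by_contra! h
    exact hg fun c => h c
  have hc' : (LinearMap.range g).mkQ c ≠ 0 := by
    rwa [Submodule.mkQ_apply, Ne, Submodule.Quotient.mk_eq_zero]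
  obtain ⟨f, hf⟩ := exists_functional p hQp hc'
  have hp0 : ((p : ℕ) : k ⧸ Ideal.span {(p : k)}) = 0 := by
    rw [← map_natCast (Ideal.Quotient.mk _), Ideal.Quotient.eq_zero_iff_mem]
    exact Ideal.mem_span_singleton_self _
  have : CharP (k ⧸ Ideal.span {(p : k)}) p := by
    have h := ringChar.charP (k ⧸ Ideal.span {(p : k)})
    rwa [CharP.ringChar_of_prime_eq_zero hp hp0] at h
  let e : ZMod p →+* (k ⧸ Ideal.span {(p : k)}) := ZMod.castHom dvd_rfl _
  have h0 := hom_zero (k := k) ((e.toAddMonoidHom.comp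
    (f.comp (LinearMap.range g).mkQ.toAddMonoidHom)).toIntLinearMap) c
  exact hf (e.injective (h0.trans (map_zero e).symm))

theorem fwd (k H : Type*) [CommRing k] [Nontrivial k] [AddCommGroup H] [Module.Finite ℤ H]
    (S : Set H) (h : Submodule.span k ((fun s => (1 : k) ⊗ₜ[ℤ] s) '' S) = ⊤) :
    Subsingleton (k ⊗[ℤ] (H ⧸ Submodule.span ℤ S)) := by
  let q := (Submodule.span ℤ S).mkQ.baseChange k
  have hq : Function.Surjective q := LinearMap.lTensor_surjective k (Submodule.mkQ_surjective _)
  have h0 : q = 0 := by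
    refine LinearMap.ext_on h ?_
    rintro _ ⟨s, hs, rfl⟩
    change (1 : k) ⊗ₜ[ℤ] (Submodule.span ℤ S).mkQ s = 0
    rw [Submodule.mkQ_apply, (Submodule.Quotient.mk_eq_zero _).2 (Submodule.subset_span hs),
      TensorProduct.tmul_zero]
  constructor
  intro a b
  obtain ⟨a, rfl⟩ := hq a
  obtain ⟨b, rfl⟩ := hq b
  simp [h0]

theorem bwd_unit (k C : Type*) [CommRing k] [AddCommGroup C] [Finite C]
    (h : ∀ p : ℕ, p.Prime → (∃ x : C, x ≠ 0 ∧ (p : ℤ) • x = 0) → IsUnit ((p : ℕ) : k)) :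
    IsUnit ((Nat.card C : ℕ) : k) := by
  have key : ∀ n : ℕ, n ≠ 0 → (∀ p : ℕ, p.Prime → p ∣ n → IsUnit (p : k)) → IsUnit (n : k) := by
    intro n
    induction n using Nat.recOnMul with
    | zero => intro h; exact absurd rfl h
    | one => simp
    | prime p hp => intro _ h; exact h p hp dvd_rfl
    | mul a b ha hb =>
      intro hab h
      rw [Nat.cast_mul]
      exact (ha (left_ne_zero_of_mul hab) fun p hp hd => h p hp (hd.mul_right b)).mul
        (hb (right_ne_zero_of_mul hab) fun p hp hd => h p hp (hd.mul_left a))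
  refine key _ Nat.card_pos.ne' fun p hp hd => h p hp ?_
  have : Fact p.Prime := ⟨hp⟩
  obtain ⟨x, hx⟩ := exists_prime_addOrderOf_dvd_card' p hd
  refine ⟨x, ?_, ?_⟩
  · rintro rfl
    rw [addOrderOf_zero] at hx
    exact hp.one_lt.ne hx
  · rw [natCast_zsmul, ← hx, addOrderOf_nsmul_eq_zero]

end Stmt7Aux
theorem stmt7 (k : Type*) [CommRing k] [IsDomain k] [IsPrincipalIdealRing k]
    {m : ℕ} (K : Finset (Finset (Fin m)))
    (hdown : ∀ σ ∈ K, ∀ τ ⊆ σ, τ ∈ K) (hempty : (∅ : Finset (Fin m)) ∈ K) :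
    -- the cokernel of `⊕_{I∈MF(K)} ℤ·x_I → H̃_*(K; ℤ)`
    let C := redHomology ℤ K ⧸
      Submodule.span ℤ ((fun I => mfClass ℤ K I) '' {I | IsMissingFace K I})
    -- `H̃_*(K; k)` generated by missing-face classes ...
    ((Submodule.span k ((fun I => mfClass k K I) '' {I | IsMissingFace K I}) = ⊤) ↔
      (Finite C ∧
       (∀ p : ℕ, p.Prime → (∃ x : C, x ≠ 0 ∧ (p : ℤ) • x = 0) → IsUnit ((p : ℕ) : k)) ∧
       (∀ p : ℕ, p.Prime →
          (∃ x : redHomology ℤ K, x ≠ 0 ∧ (p : ℤ) • x = 0) → ringChar k ≠ p))) ∧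
    -- ... and in that case `H̃_*(K; k) ≅ H̃_*(K; ℤ) ⊗ k`
    ((Submodule.span k ((fun I => mfClass k K I) '' {I | IsMissingFace K I}) = ⊤) →
      Nonempty ((TensorProduct ℤ k (redHomology ℤ K)) ≃ₗ[k] redHomology k K)) := by
  classical
  intro C
  have himg : (fun I => mfClass k K I) '' {I | IsMissingFace K I} =
      Stmt7Aux.phi k K '' ((fun s => (1 : k) ⊗ₜ[ℤ] s) ''
        ((fun I => mfClass ℤ K I) '' {I | IsMissingFace K I})) := by
    rw [Set.image_image, Set.image_image]
    refine Set.image_congr fun I hI => ?_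
    rw [Stmt7Aux.phi_tmul, one_smul, Stmt7Aux.rho_mf k hI]
  have hsurj : Submodule.span k ((fun I => mfClass k K I) '' {I | IsMissingFace K I}) = ⊤ →
      Function.Surjective (Stmt7Aux.phi k K) := by
    intro h
    rw [himg, ← Submodule.map_span] at h
    rw [← LinearMap.range_eq_top, eq_top_iff, ← h]
    exact LinearMap.map_le_range
  have hinj := Stmt7Aux.phi_inj k hdown
  have hfin : Module.Finite ℤ (redHomology ℤ K) :=
    Module.Finite.of_surjective ((Stmt7Aux.cls ℤ K).toAddMonoidHom.toIntLinearMap)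
      (Stmt7Aux.cls_surj ℤ K)
  refine ⟨⟨fun h => ?_, ?_⟩, fun h => ⟨LinearEquiv.ofBijective _ ⟨hinj, hsurj h⟩⟩⟩
  · have hs := hsurj h
    have hC : Subsingleton (k ⊗[ℤ] C) := by
      apply Stmt7Aux.fwd
      apply Submodule.map_injective_of_injective hinj
      rw [Submodule.map_span, ← himg, h, Submodule.map_top, LinearMap.range_eq_top.2 hs]
    have hCf : Module.Finite ℤ C := inferInstanceAs (Module.Finite ℤ (redHomology ℤ K ⧸
      Submodule.span ℤ ((fun I => mfClass ℤ K I) '' {I | IsMissingFace K I})))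
    refine ⟨Stmt7Aux.finite_of_tensor k C, ?_, ?_⟩
    · rintro p hp ⟨x, hx, hpx⟩
      exact Stmt7Aux.unit_of_tensor k C p hp x hx hpx
    · rintro p hp ⟨x, hx, hpx⟩ hk
      have : Fact p.Prime := ⟨hp⟩
      have : CharP k p := hk ▸ ringChar.charP k
      exact hx (Stmt7Aux.no_torsion_p (k := k) p (Stmt7Aux.theta_surj k hdown hs) x hpx)
  · rintro ⟨h1, h2, h3⟩
    have hs : Function.Surjective (Stmt7Aux.phi k K) := by
      apply Stmt7Aux.phi_surj
      rcases CharP.exists k with ⟨p, hcp⟩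
      rcases CharP.char_is_prime_or_zero k p with hp | rfl
      · have : Fact p.Prime := ⟨hp⟩
        refine Stmt7Aux.theta_surj_p p hdown fun x hx => ?_
        by_contra hx0
        exact h3 p hp ⟨x, hx0, hx⟩ (ringChar.eq k p)
      · have := CharP.charP_to_charZero k
        exact Stmt7Aux.theta_surj_zero
    have hu := Stmt7Aux.bwd_unit k C h2
    rw [himg, ← Submodule.map_span]
    suffices hh : Submodule.span k ((fun s => (1 : k) ⊗ₜ[ℤ] s) ''
        ((fun I => mfClass ℤ K I) '' {I | IsMissingFace K I})) = ⊤ by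
      rw [hh, Submodule.map_top, LinearMap.range_eq_top.2 hs]
    have hM : ∀ y ∈ Submodule.span ℤ ((fun I => mfClass ℤ K I) '' {I | IsMissingFace K I}),
        (1 : k) ⊗ₜ[ℤ] y ∈ Submodule.span k ((fun s => (1 : k) ⊗ₜ[ℤ] s) ''
        ((fun I => mfClass ℤ K I) '' {I | IsMissingFace K I})) := by
      intro y hy
      induction hy using Submodule.span_induction with
      | mem x hx => exact Submodule.subset_span ⟨x, hx, rfl⟩
      | zero => rw [TensorProduct.tmul_zero]; exact Submodule.zero_mem _
      | add a b _ _ ha hb => rw [TensorProduct.tmul_add]; exact Submodule.add_mem _ ha hb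
      | smul n a _ ha =>
        rw [TensorProduct.tmul_smul]
        exact zsmul_mem ha n
    rw [eq_top_iff]
    rintro t -
    induction t with
    | zero => exact Submodule.zero_mem _
    | add a b ha hb => exact Submodule.add_mem _ ha hb
    | tmul c x =>
      have hx : (Nat.card C) • x ∈
          Submodule.span ℤ ((fun I => mfClass ℤ K I) '' {I | IsMissingFace K I}) := by
        rw [← Submodule.Quotient.mk_eq_zero]
        exact card_nsmul_eq_zero' (G := C)
          (x := Submodule.Quotient.mk x)
      have h4 := hM _ hx
      obtain ⟨v, hv⟩ := hu
      have h5 : c ⊗ₜ[ℤ] x = (c * ↑v⁻¹) • ((1 : k) ⊗ₜ[ℤ] ((Nat.card C) • x)) := by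
        rw [TensorProduct.tmul_smul, ← Nat.cast_smul_eq_nsmul k, ← hv, smul_smul,
          TensorProduct.smul_tmul', smul_eq_mul]
        simp [mul_assoc]
      rw [h5]
      exact Submodule.smul_mem _ _ h4
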